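/- (Lemma 1: the arc-eager model contains the edge-factored model.) Fix n ≥ 1 and any real-valued function f_G on pairs of indices. Define the arc-eager parameterization by f_sh = 0, f_re = 0, f_rl(i, j) = f_G(j, i), and f_ra(k, i) = f_G(k, i). Then for every complete arc-eager transition sequence t for a sentence of length n, F(t) = Σ_{(h,m) ∈ A(t)} f_G(h, m); that is, this arc-eager parameterization assigns to every complete transition sequence exactly the edge-factored score of the arc set it produces. -/

import Mathlib

/-- A parser configuration: a stack of indices (head of the list = top of stack),
a buffer of indices (head of the list = front of buffer), and a set of arcs
`(h, m)` meaning `h` is the head of modifier `m`. -/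
structure Config where
  stack : List ℕ
  buffer : List ℕ
  arcs : Finset (ℕ × ℕ)

/-- Initial configuration for a sentence of length `n`:
empty stack, buffer `[0, 1, …, n]` (ROOT is index 0), empty arc set. -/
def initConfig (n : ℕ) : Config := ⟨[], List.range (n + 1), ∅⟩

/-- Stack-top feature of a configuration: `none` plays the role of the dummy index ⊥
used when the stack is empty. -/
def stackFeat (c : Config) : Option ℕ := c.stack.head?

/-- Buffer-front feature of a configuration: the end-marker index `n + 1`
when the buffer is empty. -/
def bufFeat (n : ℕ) (c : Config) : ℕ := c.buffer.headD (n + 1)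

/-- Arc-eager transition labels. -/
inductive ETrans
  | sh | rl | ra | re
deriving DecidableEq

/-- Single arc-eager transitions between configurations. -/
inductive EStep : Config → ETrans → Config → Prop
  | sh (σ b β A) : EStep ⟨σ, b :: β, A⟩ .sh ⟨b :: σ, β, A⟩
  | rl (s σ b β A) (h : ∀ x, (x, s) ∉ A) :
      EStep ⟨s :: σ, b :: β, A⟩ .rl ⟨σ, b :: β, insert (b, s) A⟩
  | ra (s σ b β A) :
      EStep ⟨s :: σ, b :: β, A⟩ .ra ⟨b :: s :: σ, β, insert (s, b) A⟩
  | re (s σ β A) (h : ∃ x, (x, s) ∈ A) :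
      EStep ⟨s :: σ, β, A⟩ .re ⟨σ, β, A⟩

/-- `ETrace c t c'` holds when `t` is a list of (configuration, transition) pairs,
each transition taken in the recorded configuration, leading from `c` to `c'`. -/
inductive ETrace : Config → List (Config × ETrans) → Config → Prop
  | nil (c) : ETrace c [] c
  | cons {c c' cf : Config} {τ : ETrans} {rest} :
      EStep c τ c' → ETrace c' rest cf → ETrace c ((c, τ) :: rest) cf

/-- Score of an arc-eager transition sequence under parameterization
`(fsh, fra, frl, fre)`: the sum, over the transitions, of the corresponding
scoring function evaluated at the feature pair of the configuration in which
the transition is taken. -/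
def escore (n : ℕ) (fsh fra frl fre : Option ℕ → ℕ → ℝ)
    (t : List (Config × ETrans)) : ℝ :=
  (t.map fun e =>
    (match e.2 with
      | ETrans.sh => fsh
      | ETrans.ra => fra
      | ETrans.rl => frl
      | ETrans.re => fre) (stackFeat e.1) (bufFeat n e.1)).sum

/-- Arc-hybrid transition labels. -/
inductive HTrans
  | sh | rr | rl
deriving DecidableEq

/-- Single arc-hybrid transitions between configurations. -/
inductive HStep : Config → HTrans → Config → Prop
  | sh (σ b β A) : HStep ⟨σ, b :: β, A⟩ .sh ⟨b :: σ, β, A⟩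
  | rr (s0 s1 σ β A) :
      HStep ⟨s0 :: s1 :: σ, β, A⟩ .rr ⟨s1 :: σ, β, insert (s1, s0) A⟩
  | rl (s σ b β A) :
      HStep ⟨s :: σ, b :: β, A⟩ .rl ⟨σ, b :: β, insert (b, s) A⟩

/-- `HTrace c t c'` holds when `t` is a list of (configuration, transition) pairs,
each transition taken in the recorded configuration, leading from `c` to `c'`. -/
inductive HTrace : Config → List (Config × HTrans) → Config → Prop
  | nil (c) : HTrace c [] c
  | cons {c c' cf : Config} {τ : HTrans} {rest} :
      HStep c τ c' → HTrace c' rest cf → HTrace c ((c, τ) :: rest) cf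

/-- Score of an arc-hybrid transition sequence under parameterization
`(gsh, grr, grl)`. -/
def hscore (n : ℕ) (gsh grr grl : Option ℕ → ℕ → ℝ)
    (t : List (Config × HTrans)) : ℝ :=
  (t.map fun e =>
    (match e.2 with
      | HTrans.sh => gsh
      | HTrans.rr => grr
      | HTrans.rl => grl) (stackFeat e.1) (bufFeat n e.1)).sum

theorem escore_aux
    (n : ℕ) (fG : ℕ → ℕ → ℝ)
    (fsh fra frl fre : Option ℕ → ℕ → ℝ)
    (hsh : ∀ k i, fsh k i = 0)
    (hre : ∀ k i, fre k i = 0)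
    (hrl : ∀ i j, frl (some i) j = fG j i)
    (hra : ∀ k i, fra (some k) i = fG k i)
    (c cf : Config) (t : List (Config × ETrans)) (ht : ETrace c t cf) :
    c.buffer.Nodup → (∀ x ∈ c.stack, x ∉ c.buffer) →
    (∀ x ∈ c.buffer, ∀ h, (h, x) ∉ c.arcs) →
    (∑ p ∈ c.arcs, fG p.1 p.2) + escore n fsh fra frl fre t = ∑ p ∈ cf.arcs, fG p.1 p.2 := by
  induction ht with
  | nil c => intros; simp [escore]
  | @cons c c' cf τ rest hs _ ih =>
    intro h1 h2 h3
    have key : c'.buffer.Nodup ∧ (∀ x ∈ c'.stack, x ∉ c'.buffer) ∧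
        (∀ x ∈ c'.buffer, ∀ h, (h, x) ∉ c'.arcs) ∧
        (∑ p ∈ c'.arcs, fG p.1 p.2) = (∑ p ∈ c.arcs, fG p.1 p.2) +
          escore n fsh fra frl fre [(c, τ)] := by
      cases hs with
      | sh σ b β A =>
        simp only [List.nodup_cons] at h1
        refine ⟨h1.2, by grind, by grind, by simp [escore, hsh]⟩
      | rl s σ b β A h =>
        refine ⟨h1, by grind, by grind, ?_⟩
        simp only
        rw [Finset.sum_insert (h b)]
        simp [escore, stackFeat, bufFeat, hrl, add_comm]
      | ra s σ b β A =>
        simp only [List.nodup_cons] at h1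
        refine ⟨h1.2, by grind, by grind, ?_⟩
        simp only
        rw [Finset.sum_insert (h3 b (by simp) s)]
        simp [escore, stackFeat, bufFeat, hra, add_comm]
      | re s σ β A h =>
        refine ⟨h1, by grind, by grind, by simp [escore, hre]⟩
    obtain ⟨k1, k2, k3, k4⟩ := key
    rw [← ih k1 k2 k3, k4]
    simp [escore, add_assoc]

/-- **Lemma 1 (arc-eager contains edge-factored).**
Fix `n ≥ 1` and an edge-factored parameter `fG`. Take any arc-eager
parameterization `(fsh, fra, frl, fre)` with `fsh = 0`, `fre = 0`,
`frl(i, j) = fG(j, i)`, and `fra(k, i) = fG(k, i)` (on actual indices).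
Then every complete arc-eager transition sequence `t` for a sentence of
length `n` satisfies `F(t) = ∑ (h,m) ∈ A(t), fG h m`. -/
theorem arc_eager_contains_edge_factored
    (n : ℕ) (hn : 1 ≤ n) (fG : ℕ → ℕ → ℝ)
    (fsh fra frl fre : Option ℕ → ℕ → ℝ)
    (hsh : ∀ k i, fsh k i = 0)
    (hre : ∀ k i, fre k i = 0)
    (hrl : ∀ i j, frl (some i) j = fG j i)
    (hra : ∀ k i, fra (some k) i = fG k i)
    (t : List (Config × ETrans)) (A : Finset (ℕ × ℕ))
    (ht : ETrace (initConfig n) t ⟨[0], [], A⟩) :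
    escore n fsh fra frl fre t = ∑ p ∈ A, fG p.1 p.2 := by
  have := escore_aux n fG fsh fra frl fre hsh hre hrl hra _ _ t ht
    (by simpa [initConfig] using List.nodup_range) (by simp [initConfig]) (by simp [initConfig])
  simpa [initConfig] using this
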